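/- arXiv:1105.1816 — 5 statements merged into one kernel-verified Lean document; each statement's English description precedes it below -/
import Mathlib

section
/- Let H and K be complex Hilbert spaces (complete inner product spaces over ℂ), I an index type, (ψ_i)_{i∈I} a family in H and (φ_i)_{i∈I} a family in K such that ⟪ψ_i, ψ_j⟫ = ⟪φ_i, φ_j⟫ for all i, j ∈ I. Then there exists a linear isometry V from the topological closure of the ℂ-linear span of {ψ_i : i ∈ I} into K such that V ψ_i = φ_i for all i ∈ I. -/
open scoped ComplexInnerProductSpace

/-!
Equality of the Gram matrices gives `‖∑ aᵢ φᵢ‖ = ‖∑ aᵢ ψᵢ‖` for all finitely supported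
coefficients `a`. Hence `∑ aᵢ ψᵢ ↦ ∑ aᵢ φᵢ` is well defined and isometric on the span of `ψ`, and
it extends by density and completeness of the target to the closure of the span.
-/

section DenseExtension

theorem denseRange_codRestrict_iff {R R₂ M M₂ : Type*} [Semiring R] [Semiring R₂] {σ : R →+* R₂}
    [RingHomSurjective σ] [AddCommMonoid M] [Module R M] [AddCommMonoid M₂] [Module R₂ M₂]
    [TopologicalSpace M₂] [ContinuousAdd M₂] [ContinuousConstSMul R₂ M₂]
    (f : M →ₛₗ[σ] M₂) (p : Submodule R₂ M₂) (hf : ∀ x, f x ∈ p) :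
    DenseRange (f.codRestrict p hf) ↔ p ≤ f.range.topologicalClosure := by
  have image_range : (↑) '' Set.range (f.codRestrict p hf) = (f.range : Set M₂) := by
    rw [← Set.range_comp, LinearMap.coe_range]
    rfl
  refine Subtype.dense_iff.trans ?_
  change (p : Set M₂) ⊆ closure ((↑) '' Set.range (f.codRestrict p hf)) ↔ _
  rw [image_range, ← Submodule.topologicalClosure_coe, SetLike.coe_subset_coe]

theorem exists_linearIsometry_apply_eq_of_denseRange {𝕜 𝕜₂ X E F : Type*}
    [NormedDivisionRing 𝕜] [NormedDivisionRing 𝕜₂] {σ : 𝕜 →+* 𝕜₂} [AddCommGroup X] [Module 𝕜 X]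
    [SeminormedAddCommGroup E] [Module 𝕜 E] [IsBoundedSMul 𝕜 E]
    [NormedAddCommGroup F] [Module 𝕜₂ F] [IsBoundedSMul 𝕜₂ F] [CompleteSpace F]
    {e : X →ₗ[𝕜] E} {f : X →ₛₗ[σ] F} (he : DenseRange e) (hnorm : ∀ x, ‖f x‖ = ‖e x‖) :
    ∃ V : E →ₛₗᵢ[σ] F, ∀ x, V (e x) = f x := by
  have extend_apply (x : X) : f.extendOfNorm e (e x) = f x :=
    LinearMap.extendOfNorm_eq he ⟨1, fun x ↦ by rw [hnorm, one_mul]⟩ x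
  have norm_extend (y : E) : ‖f.extendOfNorm e y‖ = ‖y‖ :=
    he.induction_on y (isClosed_eq (by fun_prop) (by fun_prop)) fun x ↦ by
      rw [extend_apply, hnorm]
  exact ⟨⟨(f.extendOfNorm e).toLinearMap, norm_extend⟩, extend_apply⟩

end DenseExtension

section Gram

variable {𝕜 E F ι κ : Type*} [RCLike 𝕜] [SeminormedAddCommGroup E] [InnerProductSpace 𝕜 E]

section Seminormed

variable [SeminormedAddCommGroup F] [InnerProductSpace 𝕜 F]

theorem inner_linearCombination_congr {v : ι → E} {w : κ → E} {v' : ι → F} {w' : κ → F}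
    (h : ∀ i j, inner 𝕜 (v i) (w j) = inner 𝕜 (v' i) (w' j)) (a : ι →₀ 𝕜) (b : κ →₀ 𝕜) :
    inner 𝕜 (Finsupp.linearCombination 𝕜 v a) (Finsupp.linearCombination 𝕜 w b) =
      inner 𝕜 (Finsupp.linearCombination 𝕜 v' a) (Finsupp.linearCombination 𝕜 w' b) := by
  simp only [Finsupp.linearCombination_apply, Finsupp.sum_inner, Finsupp.inner_sum,
    inner_smul_left, inner_smul_right, h]

theorem norm_linearCombination_eq_of_gram_eq {v : ι → E} {w : ι → F}
    (hgram : ∀ i j, inner 𝕜 (v i) (v j) = inner 𝕜 (w i) (w j)) (a : ι →₀ 𝕜) :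
    ‖Finsupp.linearCombination 𝕜 v a‖ = ‖Finsupp.linearCombination 𝕜 w a‖ := by
  rw [norm_eq_sqrt_re_inner (𝕜 := 𝕜), inner_linearCombination_congr hgram,
    ← norm_eq_sqrt_re_inner]

end Seminormed

theorem exists_isometry_of_gram_eq_general
    [NormedAddCommGroup F] [InnerProductSpace 𝕜 F] [CompleteSpace F] (v : ι → E) (w : ι → F)
    (hgram : ∀ i j, inner 𝕜 (v i) (v j) = inner 𝕜 (w i) (w j)) :
    ∃ V : (Submodule.span 𝕜 (Set.range v)).topologicalClosure →ₗᵢ[𝕜] F,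
      ∀ i, V ⟨v i, (Submodule.span 𝕜 (Set.range v)).le_topologicalClosure
              (Submodule.subset_span ⟨i, rfl⟩)⟩ = w i := by
  let S := Submodule.span 𝕜 (Set.range v)
  have range_eq : (Finsupp.linearCombination 𝕜 v).range = S := Finsupp.range_linearCombination 𝕜
  have mem_closure (a : ι →₀ 𝕜) : Finsupp.linearCombination 𝕜 v a ∈ S.topologicalClosure :=
    S.le_topologicalClosure (range_eq ▸ LinearMap.mem_range_self _ a)
  let e := (Finsupp.linearCombination 𝕜 v).codRestrict S.topologicalClosure mem_closure
  have dense_e : DenseRange e := (denseRange_codRestrict_iff _ _ _).2 (by rw [range_eq])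
  obtain ⟨V, hV⟩ := exists_linearIsometry_apply_eq_of_denseRange dense_e
    fun a ↦ (norm_linearCombination_eq_of_gram_eq hgram a).symm
  refine ⟨V, fun i ↦ ?_⟩
  have e_single : e (Finsupp.single i 1) =
      ⟨v i, S.le_topologicalClosure (Submodule.subset_span ⟨i, rfl⟩)⟩ :=
    Subtype.ext ((Finsupp.linearCombination_single 𝕜 1 i).trans (one_smul 𝕜 (v i)))
  rw [← e_single, hV, Finsupp.linearCombination_single, one_smul]

end Gram

/-- If two families `ψ : I → H` and `φ : I → K` in complex Hilbert
spaces have equal Gram matrices, then there is a linear isometry from the topological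
closure of the span of the `ψ i` into `K` sending each `ψ i` to `φ i`. -/
theorem exists_isometry_of_gram_eq
    {H : Type*} [NormedAddCommGroup H] [InnerProductSpace ℂ H] [CompleteSpace H]
    {K : Type*} [NormedAddCommGroup K] [InnerProductSpace ℂ K] [CompleteSpace K]
    {I : Type*} (ψ : I → H) (φ : I → K)
    (hgram : ∀ i j, ⟪ψ i, ψ j⟫ = ⟪φ i, φ j⟫) :
    ∃ V : (Submodule.span ℂ (Set.range ψ)).topologicalClosure →ₗᵢ[ℂ] K,
      ∀ i, V ⟨ψ i, (Submodule.span ℂ (Set.range ψ)).le_topologicalClosure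
              (Submodule.subset_span ⟨i, rfl⟩)⟩ = φ i :=
  exists_isometry_of_gram_eq_general ψ φ hgram
end

section
/- Let G be a group, H a finite-dimensional complex inner product space, and U : G →* (H ≃ₗᵢ[ℂ] H) a unitary representation of G on H. For unit vectors ψ, φ ∈ H, the following are equivalent: (A) there exists a G-invariant unitary V on H (i.e. V ∘ U(g) = U(g) ∘ V for all g ∈ G) with V ψ = φ; (B) there exists a unitary V on H such that V (U(g) ψ) = U(g) φ for all g ∈ G. -/
open scoped ComplexInnerProductSpace

/-!
Let `S` be the closed span of the orbit of `ψ` and `P` the orthogonal projection onto it. Condition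
(B) says that `V` intertwines the representation on `S`, so `P` and the partial isometry
`W = V ∘ P` lie in the commutant of the representation, which is a finite-dimensional C⋆-algebra.
In such an algebra every `w` has a polar decomposition `w = u |w|` with `u` unitary: this is clear
for invertible `w`, the invertible elements are dense, and the unitary group is compact. As
`|W| = P`, the unitary factor of `W` is an invariant unitary that agrees with `V` on `S`.
-/

section FiniteDimensionalAlgebra

variable (𝕜 : Type*) {A : Type*} [Ring A]

theorem finite_spectrum_of_finiteDimensional [Field 𝕜] [Algebra 𝕜 A] [FiniteDimensional 𝕜 A]
    (a : A) : (spectrum 𝕜 a).Finite := by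
  refine (Module.End.finite_spectrum (Algebra.lmul 𝕜 A a)).subset fun z hz hz_lmul ↦ hz ?_
  rw [spectrum.mem_resolventSet_iff, ← AlgHom.commutes (Algebra.lmul 𝕜 A) z, ← map_sub,
    Algebra.lmul_isUnit_iff] at hz_lmul
  exact hz_lmul

theorem dense_setOf_isUnit [NontriviallyNormedField 𝕜] [TopologicalSpace A] [IsTopologicalRing A]
    [Algebra 𝕜 A] [ContinuousSMul 𝕜 A] [FiniteDimensional 𝕜 A] : Dense {a : A | IsUnit a} := by
  intro a
  have h_dense : Dense (spectrum 𝕜 a)ᶜ := by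
    rw [Set.compl_eq_univ_sdiff]
    exact dense_univ.sdiff_finite (finite_spectrum_of_finiteDimensional 𝕜 a)
  have h_cont : Continuous fun z : 𝕜 ↦ a - algebraMap 𝕜 A z :=
    continuous_const.sub (continuous_algebraMap 𝕜 A)
  have h_unit : Set.MapsTo (fun z : 𝕜 ↦ a - algebraMap 𝕜 A z) (spectrum 𝕜 a)ᶜ
      {a : A | IsUnit a} :=
    fun z hz ↦ IsUnit.sub_iff.mp (spectrum.notMem_iff.mp hz)
  simpa using map_mem_closure h_cont (h_dense 0) h_unit

end FiniteDimensionalAlgebra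

section PolarDecomposition

variable {A : Type*} [CStarAlgebra A]

theorem isCompact_unitary_of_finiteDimensional [FiniteDimensional ℂ A] :
    IsCompact (unitary A : Set A) := by
  have : ProperSpace A := FiniteDimensional.proper ℂ A
  refine (isCompact_closedBall (0 : A) ‖(1 : A)‖).of_isClosed_subset isClosed_unitary
    fun u hu ↦ ?_
  rw [mem_closedBall_zero_iff, ← mul_one u, CStarRing.norm_mem_unitary_mul 1 hu]

section Abs

variable [PartialOrder A] [StarOrderedRing A]

theorem isUnit_cfcAbs {a : A} (ha : IsUnit a) : IsUnit (CFC.abs a) := by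
  have h_sq : IsUnit (CFC.abs a * CFC.abs a) := by
    rw [CFC.abs_mul_abs]
    exact ha.star.mul ha
  exact ((Commute.refl (CFC.abs a)).isUnit_mul_iff.mp h_sq).1

theorem exists_unitary_mul_cfcAbs_eq_of_isUnit {a : A} (ha : IsUnit a) :
    ∃ u ∈ unitary A, u * CFC.abs a = a := by
  obtain ⟨r, hr⟩ := isUnit_cfcAbs ha
  lift a to Aˣ using ha
  refine ⟨a * ↑r⁻¹, (Units.mul_inv_mem_unitary a r).mpr ?_, ?_⟩
  · refine Units.ext ?_
    simp only [Units.val_mul, Units.coe_star]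
    rw [hr, (CFC.abs_nonneg (a : A)).isSelfAdjoint.star_eq, CFC.abs_mul_abs]
  · rw [← hr, Units.inv_mul_cancel_right]

theorem isClosed_setOf_exists_unitary_mul_cfcAbs_eq [FiniteDimensional ℂ A] :
    IsClosed {a : A | ∃ u ∈ unitary A, u * CFC.abs a = a} := by
  have : CompactSpace (unitary A) :=
    isCompact_iff_compactSpace.mp isCompact_unitary_of_finiteDimensional
  have h_closed : IsClosed {p : unitary A × A | p.1 * CFC.abs p.2 = p.2} :=
    isClosed_eq ((continuous_subtype_val.comp continuous_fst).mul
      (CFC.continuous_abs.comp continuous_snd)) continuous_snd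
  convert isClosedMap_snd_of_compactSpace _ h_closed
  ext a
  simp

theorem exists_unitary_mul_cfcAbs_eq [FiniteDimensional ℂ A] (a : A) :
    ∃ u ∈ unitary A, u * CFC.abs a = a :=
  isClosed_setOf_exists_unitary_mul_cfcAbs_eq.closure_subset_iff.mpr
    (fun _ ↦ exists_unitary_mul_cfcAbs_eq_of_isUnit) (dense_setOf_isUnit ℂ a)

end Abs

theorem exists_unitary_mul_eq_of_star_mul_self_eq [FiniteDimensional ℂ A] {w p : A}
    (hp : IsStarProjection p) (hw : star w * w = p) : ∃ u ∈ unitary A, u * p = w := by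
  let _ := CStarAlgebra.spectralOrder A
  let _ := CStarAlgebra.spectralOrderedRing A
  have h_abs : CFC.abs w = p := by
    rw [CFC.abs, hw]
    exact CFC.sqrt_unique hp.isIdempotentElem.eq hp.nonneg
  simpa only [h_abs] using exists_unitary_mul_cfcAbs_eq w

end PolarDecomposition

section UnitaryRepresentation

variable {G : Type*} [Group G] {𝕜 : Type*} [RCLike 𝕜]
  {H : Type*} [NormedAddCommGroup H] [InnerProductSpace 𝕜 H]

section CyclicSubspace

/-- The cyclic subspace generated by `ψ`: the smallest closed subspace containing the orbit of `ψ`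
under the representation `U`. Intertwining relations along the orbit extend to it. -/
def cyclicSubspace (U : G →* (H ≃ₗᵢ[𝕜] H)) (ψ : H) : Submodule 𝕜 H :=
  (Submodule.span 𝕜 (Set.range fun g ↦ U g ψ)).topologicalClosure

variable {U : G →* (H ≃ₗᵢ[𝕜] H)} {ψ : H}

instance completeSpace_cyclicSubspace [CompleteSpace H] : CompleteSpace (cyclicSubspace U ψ) :=
  inferInstanceAs (CompleteSpace (Submodule.topologicalClosure _))

theorem map_mem_cyclicSubspace (g : G) {x : H} (hx : x ∈ cyclicSubspace U ψ) :
    U g x ∈ cyclicSubspace U ψ := by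
  have h_span : Set.MapsTo (U g) (Submodule.span 𝕜 (Set.range fun k ↦ U k ψ))
      (Submodule.span 𝕜 (Set.range fun k ↦ U k ψ)) := by
    refine Submodule.span_le (p := (Submodule.span 𝕜 _).comap
      (U g).toLinearEquiv.toLinearMap).mpr ?_
    rintro _ ⟨k, rfl⟩
    exact Submodule.subset_span ⟨g * k, DFunLike.congr_fun (map_mul U g k) ψ⟩
  exact h_span.closure (U g).continuous hx

theorem self_mem_cyclicSubspace : ψ ∈ cyclicSubspace U ψ :=
  Submodule.le_topologicalClosure _ (Submodule.subset_span ⟨1, by simp⟩)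

theorem map_comm_of_mem_cyclicSubspace {φ : H} {V : H →L[𝕜] H} (hV : ∀ g, V (U g ψ) = U g φ)
    (g : G) {x : H} (hx : x ∈ cyclicSubspace U ψ) : V (U g x) = U g (V x) := by
  have h_orbit : Set.EqOn (V ∘L (U g : H →L[𝕜] H)) ((U g : H →L[𝕜] H) ∘L V)
      (Set.range fun k ↦ U k ψ) := by
    rintro _ ⟨k, rfl⟩
    calc V (U g (U k ψ)) = V (U (g * k) ψ) := by
          rw [map_mul, LinearIsometryEquiv.coe_mul, Function.comp_apply]
      _ = U (g * k) φ := hV (g * k)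
      _ = U g (U k φ) := by rw [map_mul, LinearIsometryEquiv.coe_mul, Function.comp_apply]
      _ = U g (V (U k ψ)) := by rw [hV k]
  exact ContinuousLinearMap.eqOn_closure_span h_orbit hx

end CyclicSubspace

section Commutant

variable [CompleteSpace H]

/-- The commutant of a unitary representation: the algebra of bounded operators that
commute with every `U g`. It is taken as a ⋆-subalgebra so that over `ℂ` it is itself a C⋆-algebra,
in which polar decompositions can be formed. -/
noncomputable def commutant (U : G →* (H ≃ₗᵢ[𝕜] H)) : StarSubalgebra 𝕜 (H →L[𝕜] H) :=
  StarSubalgebra.centralizer 𝕜 (Set.range fun g ↦ (U g : H →L[𝕜] H))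

variable {U : G →* (H ≃ₗᵢ[𝕜] H)}

theorem mem_commutant_iff {T : H →L[𝕜] H} :
    T ∈ commutant U ↔ ∀ g x, T (U g x) = U g (T x) := by
  have h_star (g : G) : star (U g : H →L[𝕜] H) = U g⁻¹ := by
    rw [ContinuousLinearMap.star_eq_adjoint, LinearIsometryEquiv.adjoint_eq_symm, map_inv]
    rfl
  have h_comm (g : G) : (U g : H →L[𝕜] H) * T = T * U g ↔ ∀ x, T (U g x) = U g (T x) := by
    rw [eq_comm, ContinuousLinearMap.ext_iff]
    rfl
  simp only [commutant, StarSubalgebra.mem_centralizer_iff, Set.forall_mem_range, h_star, h_comm]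
  exact ⟨fun h g ↦ (h g).1, fun h g ↦ ⟨h g, h g⁻¹⟩⟩

instance isClosed_commutant : IsClosed (commutant U : Set (H →L[𝕜] H)) :=
  Set.isClosed_centralizer _

instance finiteDimensional_commutant [FiniteDimensional 𝕜 H] :
    FiniteDimensional 𝕜 (commutant U) :=
  inferInstanceAs (FiniteDimensional 𝕜 (commutant U).toSubalgebra.toSubmodule)

theorem starProjection_mem_commutant {S : Submodule 𝕜 H} [S.HasOrthogonalProjection]
    (hS : ∀ g, ∀ x ∈ S, U g x ∈ S) : S.starProjection ∈ commutant U := by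
  refine mem_commutant_iff.mpr fun g x ↦ ?_
  refine Submodule.eq_starProjection_of_mem_of_inner_eq_zero
    (hS g _ (S.starProjection_apply_mem x)) fun y hy ↦ ?_
  have h_inv : U g (U g⁻¹ y) = y := by
    rw [map_inv]
    exact (U g).apply_symm_apply y
  rw [← map_sub, ← h_inv, LinearIsometryEquiv.inner_map_map]
  exact S.starProjection_inner_eq_zero x _ (hS g⁻¹ y hy)

theorem star_comp_orthogonalProjectionOnto_mul_self {S : Submodule 𝕜 H}
    [S.HasOrthogonalProjection] (L : S →ₗᵢ[𝕜] H) :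
    star (L.toContinuousLinearMap ∘L S.orthogonalProjectionOnto) *
      (L.toContinuousLinearMap ∘L S.orthogonalProjectionOnto) = S.starProjection := by
  refine ContinuousLinearMap.ext fun x ↦ ext_inner_right 𝕜 fun y ↦ ?_
  simp [ContinuousLinearMap.star_eq_adjoint, ContinuousLinearMap.adjoint_inner_left]

end Commutant

end UnitaryRepresentation

section ComplexUnitaryRepresentation

variable {G : Type*} [Group G]
  {H : Type*} [NormedAddCommGroup H] [InnerProductSpace ℂ H] [CompleteSpace H]

theorem exists_invariant_unitary_extending {U : G →* (H ≃ₗᵢ[ℂ] H)}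
    [FiniteDimensional ℂ (commutant U)] {S : Submodule ℂ H} [S.HasOrthogonalProjection]
    (hS : ∀ g, ∀ x ∈ S, U g x ∈ S)
    (L : S →ₗᵢ[ℂ] H) (hL : ∀ g (x : S), L ⟨U g x, hS g x x.2⟩ = U g (L x)) :
    ∃ V : H ≃ₗᵢ[ℂ] H, (∀ g x, V (U g x) = U g (V x)) ∧ ∀ x : S, V x = L x := by
  have hP := starProjection_mem_commutant hS
  let W : H →L[ℂ] H := L.toContinuousLinearMap ∘L S.orthogonalProjectionOnto
  have hW : W ∈ commutant U := by
    refine mem_commutant_iff.mpr fun g x ↦ ?_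
    have h_proj : S.orthogonalProjectionOnto (U g x) =
        ⟨U g (S.orthogonalProjectionOnto x), hS g _ (S.orthogonalProjectionOnto x).2⟩ :=
      Subtype.ext (mem_commutant_iff.mp hP g x)
    exact (congrArg L h_proj).trans (hL g _)
  obtain ⟨u, hu, huP⟩ := exists_unitary_mul_eq_of_star_mul_self_eq
    (w := (⟨W, hW⟩ : commutant U)) (p := ⟨S.starProjection, hP⟩)
    ⟨Subtype.ext S.isIdempotentElem_starProjection,
      Subtype.ext isStarProjection_starProjection.isSelfAdjoint⟩
    (Subtype.ext (star_comp_orthogonalProjectionOnto_mul_self L))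
  have h_unitary : (u : H →L[ℂ] H) ∈ unitary (H →L[ℂ] H) :=
    Unitary.map_mem (commutant U).subtype hu
  refine ⟨Unitary.linearIsometryEquiv ⟨u, h_unitary⟩, mem_commutant_iff.mp u.2, fun x ↦ ?_⟩
  calc (u : H →L[ℂ] H) x = (u : H →L[ℂ] H) (S.starProjection x) := by simp
    _ = L (S.orthogonalProjectionOnto x) := congr($(congrArg Subtype.val huP) x)
    _ = L x := by simp

theorem exists_invariant_unitary_iff_exists_unitary_on_orbit_general
    (U : G →* (H ≃ₗᵢ[ℂ] H)) [FiniteDimensional ℂ (commutant U)] (ψ φ : H) :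
    (∃ V : H ≃ₗᵢ[ℂ] H, (∀ g : G, ∀ x : H, V (U g x) = U g (V x)) ∧ V ψ = φ) ↔
      (∃ V : H ≃ₗᵢ[ℂ] H, ∀ g : G, V (U g ψ) = U g φ) := by
  constructor
  · rintro ⟨V, hV, rfl⟩
    exact ⟨V, fun g ↦ hV g ψ⟩
  · rintro ⟨V, hV⟩
    let L : cyclicSubspace U ψ →ₗᵢ[ℂ] H := V.toLinearIsometry.comp (Submodule.subtypeₗᵢ _)
    obtain ⟨V', h_comm, h_ext⟩ := exists_invariant_unitary_extending
      (fun g _ ↦ map_mem_cyclicSubspace g) L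
      fun g x ↦ map_comm_of_mem_cyclicSubspace (V := (V : H →L[ℂ] H)) hV g x.2
    refine ⟨V', h_comm, ?_⟩
    calc V' ψ = V ψ := h_ext ⟨ψ, self_mem_cyclicSubspace⟩
      _ = φ := by simpa using hV 1

end ComplexUnitaryRepresentation

/-- **Lemma 2.** For a unitary representation `U` of a group `G` on a
finite-dimensional complex inner product space `H` and unit vectors `ψ, φ`, the
following are equivalent: (A) some `G`-invariant unitary maps `ψ` to `φ`; (B) some
unitary maps `U g ψ` to `U g φ` for every `g`. -/
theorem exists_invariant_unitary_iff_exists_unitary_on_orbit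
    {G : Type*} [Group G]
    {H : Type*} [NormedAddCommGroup H] [InnerProductSpace ℂ H] [FiniteDimensional ℂ H]
    (U : G →* (H ≃ₗᵢ[ℂ] H)) (ψ φ : H) (hψ : ‖ψ‖ = 1) (hφ : ‖φ‖ = 1) :
    (∃ V : H ≃ₗᵢ[ℂ] H, (∀ g : G, ∀ x : H, V (U g x) = U g (V x)) ∧ V ψ = φ) ↔
      (∃ V : H ≃ₗᵢ[ℂ] H, ∀ g : G, V (U g ψ) = U g φ) := by
  have := FiniteDimensional.complete ℂ H
  exact exists_invariant_unitary_iff_exists_unitary_on_orbit_general U ψ φ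
end

section
/- Let G be a group, H₁ and H₂ complex Hilbert spaces, and U₁ : G →* (H₁ ≃ₗᵢ[ℂ] H₁), U₂ : G →* (H₂ ≃ₗᵢ[ℂ] H₂) unitary representations of G. Let ψ ∈ H₁ and φ ∈ H₂ be unit vectors with ⟪ψ, U₁(g) ψ⟫ = ⟪φ, U₂(g) φ⟫ for all g ∈ G. Then there exists a linear isometry V from the topological closure of the ℂ-linear span of the orbit {U₁(g) ψ : g ∈ G} into H₂ such that V (U₁(g) ψ) = U₂(g) φ for all g ∈ G; in particular V ψ = φ. -/
open scoped ComplexInnerProductSpace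

/-!
Unitarity turns `⟪U g ψ, U h ψ⟫` into `⟪ψ, U (g⁻¹ * h) ψ⟫`, so the characteristic function of `ψ`
determines all inner products between vectors of its orbit, hence the norm of every finite linear
combination of them. The assignment `∑ c g • U₁ g ψ ↦ ∑ c g • U₂ g φ` is therefore well defined and
isometric, and it extends to the closure because the target is complete.
-/

section DenseExtension

open LinearMap

theorem denseRange_codRestrict_iff_s4 {R M E : Type*} [Semiring R] [AddCommMonoid M] [Module R M]
    [AddCommMonoid E] [Module R E] [TopologicalSpace E] {S : Submodule R E} {f : M →ₗ[R] E}
    (hf : ∀ x, f x ∈ S) :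
    DenseRange (f.codRestrict S hf) ↔ (S : Set E) ⊆ closure (Set.range f) := by
  rw [DenseRange, Subtype.dense_iff, ← Set.range_comp]
  rfl

theorem exists_linearIsometry_of_denseRange_of_norm_eq {𝕜 𝕜₂ M E F : Type*}
    [NormedDivisionRing 𝕜] [NormedDivisionRing 𝕜₂] {σ : 𝕜 →+* 𝕜₂} [AddCommGroup M] [Module 𝕜 M]
    [SeminormedAddCommGroup E] [Module 𝕜 E] [IsBoundedSMul 𝕜 E]
    [NormedAddCommGroup F] [Module 𝕜₂ F] [IsBoundedSMul 𝕜₂ F] [CompleteSpace F]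
    {e : M →ₗ[𝕜] E} {f : M →ₛₗ[σ] F} (he : DenseRange e) (hnorm : ∀ x, ‖f x‖ = ‖e x‖) :
    ∃ V : E →ₛₗᵢ[σ] F, ∀ x, V (e x) = f x := by
  have extend_apply (x : M) : f.extendOfNorm e (e x) = f x :=
    extendOfNorm_eq he ⟨1, fun y => by rw [hnorm, one_mul]⟩ x
  have norm_extend (y : E) : ‖f.extendOfNorm e y‖ = ‖y‖ := by
    induction y using he.induction_on with
    | hp => exact isClosed_eq (by fun_prop) (by fun_prop)
    | ih x => rw [extend_apply, hnorm]
  exact ⟨⟨(f.extendOfNorm e).toLinearMap, norm_extend⟩, extend_apply⟩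

end DenseExtension

section GramMatrix

open Submodule
open scoped InnerProductSpace

variable {𝕜 ι E F : Type*} [RCLike 𝕜] [SeminormedAddCommGroup E] [InnerProductSpace 𝕜 E]

theorem norm_linearCombination_eq_of_inner_eq
    [SeminormedAddCommGroup F] [InnerProductSpace 𝕜 F] {v : ι → E} {w : ι → F}
    (hinner : ∀ i j, ⟪v i, v j⟫_𝕜 = ⟪w i, w j⟫_𝕜) (c : ι →₀ 𝕜) :
    ‖Finsupp.linearCombination 𝕜 v c‖ = ‖Finsupp.linearCombination 𝕜 w c‖ := by
  have inner_self_eq : ⟪Finsupp.linearCombination 𝕜 v c, Finsupp.linearCombination 𝕜 v c⟫_𝕜 =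
      ⟪Finsupp.linearCombination 𝕜 w c, Finsupp.linearCombination 𝕜 w c⟫_𝕜 := by
    simp only [Finsupp.linearCombination_apply, Finsupp.sum_inner, Finsupp.inner_sum,
      inner_smul_left, inner_smul_right, hinner]
  rw [norm_eq_sqrt_re_inner (𝕜 := 𝕜), inner_self_eq, ← norm_eq_sqrt_re_inner]

theorem exists_linearIsometry_topologicalClosure_span_of_inner_eq
    [NormedAddCommGroup F] [InnerProductSpace 𝕜 F] [CompleteSpace F] {v : ι → E} {w : ι → F}
    (hinner : ∀ i j, ⟪v i, v j⟫_𝕜 = ⟪w i, w j⟫_𝕜) :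
    ∃ V : (span 𝕜 (Set.range v)).topologicalClosure →ₗᵢ[𝕜] F,
      ∀ i, V ⟨v i, le_topologicalClosure _ (subset_span ⟨i, rfl⟩)⟩ = w i := by
  have range_eq : LinearMap.range (Finsupp.linearCombination 𝕜 v) = span 𝕜 (Set.range v) :=
    Finsupp.range_linearCombination 𝕜
  have mem_closure (c : ι →₀ 𝕜) :
      Finsupp.linearCombination 𝕜 v c ∈ (span 𝕜 (Set.range v)).topologicalClosure :=
    le_topologicalClosure _ (range_eq ▸ LinearMap.mem_range_self _ c)
  have dense : DenseRange ((Finsupp.linearCombination 𝕜 v).codRestrict _ mem_closure) := by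
    rw [denseRange_codRestrict_iff_s4, ← LinearMap.coe_range, range_eq, topologicalClosure_coe]
  obtain ⟨V, hV⟩ := exists_linearIsometry_of_denseRange_of_norm_eq dense
    fun c => (norm_linearCombination_eq_of_inner_eq hinner c).symm
  refine ⟨V, fun i => ?_⟩
  simpa [LinearMap.codRestrict] using hV (Finsupp.single i 1)

end GramMatrix

section UnitaryRepresentation

open Submodule
open scoped InnerProductSpace

variable {𝕜 G E F : Type*} [RCLike 𝕜] [Group G] [SeminormedAddCommGroup E] [InnerProductSpace 𝕜 E]

theorem inner_map_map_eq_inner_map_inv_mul (U : G →* (E ≃ₗᵢ[𝕜] E)) (x y : E) (g h : G) :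
    ⟪U g x, U h y⟫_𝕜 = ⟪x, U (g⁻¹ * h) y⟫_𝕜 := by
  have map_factor : U h y = U g (U (g⁻¹ * h) y) := by
    rw [← Function.comp_apply (f := U g), ← LinearIsometryEquiv.coe_mul, ← map_mul,
      mul_inv_cancel_left]
  rw [map_factor, LinearIsometryEquiv.inner_map_map]

theorem exists_isometry_on_orbit_of_charFun_eq_general
    [NormedAddCommGroup F] [InnerProductSpace 𝕜 F] [CompleteSpace F]
    (U₁ : G →* (E ≃ₗᵢ[𝕜] E)) (U₂ : G →* (F ≃ₗᵢ[𝕜] F)) (ψ : E) (φ : F)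
    (hchar : ∀ g : G, ⟪ψ, U₁ g ψ⟫_𝕜 = ⟪φ, U₂ g φ⟫_𝕜) :
    ∃ V : (span 𝕜 (Set.range fun g : G => U₁ g ψ)).topologicalClosure →ₗᵢ[𝕜] F,
      (∀ g : G, V ⟨U₁ g ψ, le_topologicalClosure _ (subset_span ⟨g, rfl⟩)⟩ = U₂ g φ) ∧
      V ⟨ψ, le_topologicalClosure _ (subset_span ⟨1, by simp⟩)⟩ = φ := by
  have inner_orbits_eq (g h : G) : ⟪U₁ g ψ, U₁ h ψ⟫_𝕜 = ⟪U₂ g φ, U₂ h φ⟫_𝕜 := by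
    simp only [inner_map_map_eq_inner_map_inv_mul, hchar]
  obtain ⟨V, hV⟩ := exists_linearIsometry_topologicalClosure_span_of_inner_eq inner_orbits_eq
  exact ⟨V, hV, by simpa using hV 1⟩

end UnitaryRepresentation

/-- If unit vectors `ψ ∈ H₁` and `φ ∈ H₂` of unitary representations
`U₁, U₂` of `G` on complex Hilbert spaces have equal characteristic functions, then
there is a linear isometry from the closure of the span of the orbit `{U₁ g ψ}` into
`H₂` sending `U₁ g ψ` to `U₂ g φ` for every `g`; in particular it sends `ψ` to `φ`. -/
theorem exists_isometry_on_orbit_of_charFun_eq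
    {G : Type*} [Group G]
    {H₁ : Type*} [NormedAddCommGroup H₁] [InnerProductSpace ℂ H₁] [CompleteSpace H₁]
    {H₂ : Type*} [NormedAddCommGroup H₂] [InnerProductSpace ℂ H₂] [CompleteSpace H₂]
    (U₁ : G →* (H₁ ≃ₗᵢ[ℂ] H₁)) (U₂ : G →* (H₂ ≃ₗᵢ[ℂ] H₂))
    (ψ : H₁) (φ : H₂) (hψ : ‖ψ‖ = 1) (hφ : ‖φ‖ = 1)
    (hchar : ∀ g : G, ⟪ψ, U₁ g ψ⟫ = ⟪φ, U₂ g φ⟫) :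
    ∃ V : (Submodule.span ℂ (Set.range fun g : G => U₁ g ψ)).topologicalClosure →ₗᵢ[ℂ] H₂,
      (∀ g : G,
        V ⟨U₁ g ψ, (Submodule.span ℂ (Set.range fun g : G => U₁ g ψ)).le_topologicalClosure
              (Submodule.subset_span ⟨g, rfl⟩)⟩ = U₂ g φ) ∧
      V ⟨ψ, (Submodule.span ℂ (Set.range fun g : G => U₁ g ψ)).le_topologicalClosure
              (Submodule.subset_span ⟨1, by simp⟩)⟩ = φ := by
  exact exists_isometry_on_orbit_of_charFun_eq_general U₁ U₂ ψ φ hchar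
end

section
/- Let G be a finite group, H₁ and H₂ finite-dimensional complex inner product spaces, U₁ and U₂ unitary representations of G on H₁ and H₂, and ψ ∈ H₁, φ ∈ H₂ unit vectors with characteristic functions χ_ψ(g) = ⟪ψ, U₁(g) ψ⟫ and χ_φ(g) = ⟪φ, U₂(g) φ⟫. The following are equivalent: (A) there exist a finite-dimensional complex inner product space K, a unitary representation W of G on K, and a unit vector η ∈ K such that ⟪ψ, U₁(g) ψ⟫ = ⟪φ ⊗ η, (U₂(g) ⊗ W(g))(φ ⊗ η)⟫ for all g ∈ G; (B) there exists a positive definite function f : G → ℂ with f(1) = 1 such that χ_ψ(g) = χ_φ(g) · f(g) for all g ∈ G. -/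
open scoped ComplexInnerProductSpace ComplexOrder

/-- An extension of a finite-dimensional unitary representation `U₂` of `G` on `H₂` by
an ancilla: a finite-dimensional unitary representation `W` of `G` on a space `K` with
a vector `η`, together with a realization `T` of the tensor product `H₂ ⊗ K` — a
complex inner product space with a bilinear map `tmul` satisfying
`⟪a ⊗ b, c ⊗ d⟫ = ⟪a, c⟫·⟪b, d⟫` — carrying the tensor product representation
`g ↦ U₂ g ⊗ W g`. -/
structure TensorExtension {G : Type*} [Group G]
    {H₂ : Type*} [NormedAddCommGroup H₂] [InnerProductSpace ℂ H₂] [FiniteDimensional ℂ H₂]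
    (U₂ : G →* (H₂ ≃ₗᵢ[ℂ] H₂)) where
  K : Type
  [nK : NormedAddCommGroup K]
  [ipK : InnerProductSpace ℂ K]
  [fdK : FiniteDimensional ℂ K]
  W : G →* (K ≃ₗᵢ[ℂ] K)
  η : K
  T : Type
  [nT : NormedAddCommGroup T]
  [ipT : InnerProductSpace ℂ T]
  tmul : H₂ →ₗ[ℂ] K →ₗ[ℂ] T
  inner_tmul : ∀ (a c : H₂) (b d : K),
    (inner ℂ (tmul a b) (tmul c d) : ℂ) = inner ℂ a c * inner ℂ b d
  rep : G →* (T ≃ₗᵢ[ℂ] T)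
  rep_tmul : ∀ (g : G) (a : H₂) (b : K), rep g (tmul a b) = tmul (U₂ g a) (W g b)

attribute [instance] TensorExtension.nK TensorExtension.ipK TensorExtension.fdK
  TensorExtension.nT TensorExtension.ipT

/-!
If `χ_ψ = χ_{φ ⊗ η}`, then the factor `f = χ_η` is positive definite because its matrices
`χ_η (gᵢ⁻¹ gⱼ) = ⟪W gᵢ η, W gⱼ η⟫` are Gram matrices. Conversely, for positive definite `f` the
kernel `M i j = f (i⁻¹ j)` on `G × G` is positive semidefinite and invariant under left
translation. By uniqueness of the positive square root `√M` is invariant as well, so `g` acting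
by the left regular representation sends the column `η = √M δ₁` to `√M δ_g`; hence
`⟪η, g • η⟫ = M 1 g = f g`.
-/

section

open scoped TensorProduct

variable {𝕜 G : Type*} [RCLike 𝕜] [Group G]

/-- Positive definite functions on a group, tested as in the classical definition on finite
families `g₁, …, gₙ` in `G` through the matrices `(f (gᵢ⁻¹ gⱼ))ᵢⱼ`. -/
def IsPosDefFun (f : G → 𝕜) : Prop :=
  ∀ (n : ℕ) (g : Fin n → G), (Matrix.of fun i j : Fin n => f ((g i)⁻¹ * g j)).PosSemidef

theorem IsPosDefFun.posSemidef {f : G → 𝕜} (hf : IsPosDefFun f) {ι : Type*} [Finite ι]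
    (g : ι → G) : (Matrix.of fun i j : ι => f ((g i)⁻¹ * g j)).PosSemidef := by
  obtain ⟨n, ⟨e⟩⟩ := Finite.exists_equiv_fin ι
  simpa [Matrix.submatrix] using (hf n (g ∘ e.symm)).submatrix e

section UnitaryRep

variable {H K : Type*} [NormedAddCommGroup H] [InnerProductSpace 𝕜 H]
  [NormedAddCommGroup K] [InnerProductSpace 𝕜 K]

/-- The characteristic function `χ_ψ` of a vector `ψ` in a unitary representation `U`; the vector
is not required to be normalized. -/
def repCharFun (U : G →* (H ≃ₗᵢ[𝕜] H)) (ψ : H) (g : G) : 𝕜 :=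
  inner 𝕜 ψ (U g ψ)

theorem repCharFun_one_eq_one_iff (U : G →* (H ≃ₗᵢ[𝕜] H)) (ψ : H) :
    repCharFun U ψ 1 = 1 ↔ ‖ψ‖ = 1 := by
  rw [repCharFun, map_one, LinearIsometryEquiv.coe_one, id_eq, inner_self_eq_norm_sq_to_K]
  norm_cast
  exact pow_eq_one_iff_of_nonneg (norm_nonneg ψ) two_ne_zero

theorem repCharFun_inv_mul (U : G →* (H ≃ₗᵢ[𝕜] H)) (ψ : H) (g h : G) :
    repCharFun U ψ (g⁻¹ * h) = inner 𝕜 (U g ψ) (U h ψ) := by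
  rw [repCharFun, ← (U g).inner_map_map, ← Function.comp_apply (f := U g),
    ← LinearIsometryEquiv.coe_mul, ← map_mul, mul_inv_cancel_left]

theorem isPosDefFun_repCharFun (U : G →* (H ≃ₗᵢ[𝕜] H)) (ψ : H) :
    IsPosDefFun (repCharFun U ψ) := by
  intro n g
  simpa only [repCharFun_inv_mul] using! Matrix.posSemidef_gram 𝕜 fun i => U (g i) ψ

/-- The transport of a unitary representation along an isometric isomorphism, which serves to move
a representation to a space in another universe. -/
def conjRep (e : H ≃ₗᵢ[𝕜] K) (U : G →* (H ≃ₗᵢ[𝕜] H)) : G →* (K ≃ₗᵢ[𝕜] K) where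
  toFun g := (e.symm.trans (U g)).trans e
  map_one' := by ext; simp
  map_mul' g h := by ext; simp

theorem conjRep_apply_apply (e : H ≃ₗᵢ[𝕜] K) (U : G →* (H ≃ₗᵢ[𝕜] H)) (g : G) (x : H) :
    conjRep e U g (e x) = e (U g x) := by
  simp [conjRep]

theorem repCharFun_conjRep (e : H ≃ₗᵢ[𝕜] K) (U : G →* (H ≃ₗᵢ[𝕜] H)) (ψ : H) :
    repCharFun (conjRep e U) (e ψ) = repCharFun U ψ := by
  ext g
  rw [repCharFun, conjRep_apply_apply, e.inner_map_map, repCharFun]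

/-- The tensor product of two unitary representations, acting by `U g ⊗ W g`. -/
noncomputable def tensorRep (U : G →* (H ≃ₗᵢ[𝕜] H)) (W : G →* (K ≃ₗᵢ[𝕜] K)) :
    G →* ((H ⊗[𝕜] K) ≃ₗᵢ[𝕜] (H ⊗[𝕜] K)) where
  toFun g := TensorProduct.congrIsometry (U g) (W g)
  map_one' := by
    rw [map_one, map_one]
    exact TensorProduct.congrIsometry_refl_refl
  map_mul' g h := by
    rw [map_mul, map_mul]
    exact LinearIsometryEquiv.toLinearEquiv_injective (TensorProduct.congr_mul ..)

end UnitaryRep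

open scoped MatrixOrder in
theorem exists_posSemidef_mul_self_eq_submatrix_invariant {n : Type*} [Fintype n]
    {M : Matrix n n 𝕜} (hM : M.PosSemidef) :
    ∃ S : Matrix n n 𝕜, S.PosSemidef ∧ S * S = M ∧
      ∀ e : Equiv.Perm n, M.submatrix e e = M → S.submatrix e e = S := by
  classical
  have sqrt_posSemidef : (CFC.sqrt M).PosSemidef :=
    Matrix.nonneg_iff_posSemidef.1 (CFC.sqrt_nonneg M)
  have sqrt_mul_sqrt : CFC.sqrt M * CFC.sqrt M = M := CFC.sqrt_mul_sqrt_self M hM.nonneg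
  refine ⟨CFC.sqrt M, sqrt_posSemidef, sqrt_mul_sqrt, fun e he => ?_⟩
  refine (CFC.sqrt_unique ?_ (sqrt_posSemidef.submatrix e).nonneg).symm
  rw [Matrix.submatrix_mul_equiv, sqrt_mul_sqrt, he]

section RegularRep

variable [Fintype G]

variable (𝕜 G) in
/-- The left regular representation of a finite group on `ℓ²(G)`, in which every positive definite
function is realized as a characteristic function. -/
noncomputable def leftRegularRep : G →* (EuclideanSpace 𝕜 G ≃ₗᵢ[𝕜] EuclideanSpace 𝕜 G) where
  toFun g := .piLpCongrLeft 2 𝕜 𝕜 (Equiv.mulLeft g)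
  map_one' := by
    ext v i
    exact congrArg v (show 1⁻¹ * i = i by simp)
  map_mul' g h := by
    ext v i
    exact congrArg v (show (g * h)⁻¹ * i = h⁻¹ * (g⁻¹ * i) by simp [mul_assoc])

theorem leftRegularRep_apply (g i : G) (v : EuclideanSpace 𝕜 G) :
    leftRegularRep 𝕜 G g v i = v (g⁻¹ * i) :=
  rfl

theorem exists_repCharFun_leftRegularRep_eq {f : G → 𝕜} (hf : IsPosDefFun f) :
    ∃ η, repCharFun (leftRegularRep 𝕜 G) η = f := by
  let M : Matrix G G 𝕜 := .of fun i j => f (i⁻¹ * j)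
  have M_invariant (g : G) : M.submatrix (Equiv.mulLeft g) (Equiv.mulLeft g) = M := by
    ext i j
    simp [M, mul_assoc]
  obtain ⟨S, S_posSemidef, S_mul_S, S_invariant⟩ :=
    exists_posSemidef_mul_self_eq_submatrix_invariant (M := M) (hf.posSemidef id)
  have S_translate (g i : G) : S (g⁻¹ * i) 1 = S i g := by
    simpa using congrFun₂ (S_invariant _ (M_invariant g⁻¹)) i g
  refine ⟨WithLp.toLp 2 fun i => S i 1, funext fun g => ?_⟩
  calc repCharFun (leftRegularRep 𝕜 G) (WithLp.toLp 2 fun i => S i 1) g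
      = ∑ i, star (S i 1) * S i g := by
        simp [repCharFun, PiLp.inner_apply, leftRegularRep_apply, S_translate, mul_comm]
    _ = (S.conjTranspose * S) 1 g := by simp [Matrix.mul_apply]
    _ = M 1 g := by rw [S_posSemidef.isHermitian.eq, S_mul_S]
    _ = f g := by simp [M]

end RegularRep

namespace TensorExtension

variable {H₂ : Type*} [NormedAddCommGroup H₂] [InnerProductSpace ℂ H₂] [FiniteDimensional ℂ H₂]

theorem repCharFun_rep_tmul {U₂ : G →* (H₂ ≃ₗᵢ[ℂ] H₂)} (d : TensorExtension U₂) (φ : H₂) (g : G) :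
    repCharFun d.rep (d.tmul φ d.η) g = repCharFun U₂ φ g * repCharFun d.W d.η g := by
  rw [repCharFun, d.rep_tmul, d.inner_tmul, repCharFun, repCharFun]

variable {K : Type*} [NormedAddCommGroup K] [InnerProductSpace ℂ K] [FiniteDimensional ℂ K]

/-- The extension of `U₂` by an ancilla `(W, η)` living in an arbitrary universe. The fields `K`
and `T` must lie in `Type`, so both tensor factors are replaced by Euclidean spaces. -/
noncomputable def ofRep (U₂ : G →* (H₂ ≃ₗᵢ[ℂ] H₂)) (W : G →* (K ≃ₗᵢ[ℂ] K)) (η : K) :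
    TensorExtension U₂ :=
  let e₂ := (stdOrthonormalBasis ℂ H₂).repr
  let e := (stdOrthonormalBasis ℂ K).repr
  { K := EuclideanSpace ℂ (Fin (Module.finrank ℂ K))
    W := conjRep e W
    η := e η
    T := EuclideanSpace ℂ (Fin (Module.finrank ℂ H₂)) ⊗[ℂ]
      EuclideanSpace ℂ (Fin (Module.finrank ℂ K))
    tmul := TensorProduct.mk ℂ _ _ ∘ₗ e₂.toLinearEquiv.toLinearMap
    inner_tmul a c b d := by simp
    rep := tensorRep (conjRep e₂ U₂) (conjRep e W)
    rep_tmul g a b := by simp [tensorRep, conjRep_apply_apply] }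

theorem repCharFun_ofRep (U₂ : G →* (H₂ ≃ₗᵢ[ℂ] H₂)) (W : G →* (K ≃ₗᵢ[ℂ] K)) (η : K) :
    repCharFun (ofRep U₂ W η).W (ofRep U₂ W η).η = repCharFun W η :=
  repCharFun_conjRep ..

end TensorExtension

theorem charFun_factors_iff_posDef_ratio_general [Finite G]
    {H₂ : Type*} [NormedAddCommGroup H₂] [InnerProductSpace ℂ H₂] [FiniteDimensional ℂ H₂]
    (U₂ : G →* (H₂ ≃ₗᵢ[ℂ] H₂)) (χ : G → ℂ) (φ : H₂) :
    (∃ d : TensorExtension U₂, ‖d.η‖ = 1 ∧ ∀ g, χ g = repCharFun d.rep (d.tmul φ d.η) g) ↔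
      ∃ f : G → ℂ, f 1 = 1 ∧ IsPosDefFun f ∧ ∀ g, χ g = repCharFun U₂ φ g * f g := by
  simp only [TensorExtension.repCharFun_rep_tmul]
  constructor
  · rintro ⟨d, hη, hχ⟩
    exact ⟨repCharFun d.W d.η, (repCharFun_one_eq_one_iff ..).2 hη, isPosDefFun_repCharFun _ _, hχ⟩
  · rintro ⟨f, hf_one, hf, hχ⟩
    have := Fintype.ofFinite G
    obtain ⟨η, hη⟩ := exists_repCharFun_leftRegularRep_eq hf
    let d := TensorExtension.ofRep U₂ (leftRegularRep ℂ G) η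
    have hd : repCharFun d.W d.η = f := (TensorExtension.repCharFun_ofRep ..).trans hη
    exact ⟨d, (repCharFun_one_eq_one_iff d.W d.η).1 (hd ▸ hf_one), hd ▸ hχ⟩

end

/-- **Theorem 4, kinematical form.** For unit vectors `ψ, φ` of
finite-dimensional unitary representations `U₁, U₂` of a finite group `G`, the
characteristic function of `ψ` equals that of `φ ⊗ η` for some unit vector `η` of some
ancillary unitary representation `W` of `G` iff `χ_ψ = χ_φ · f` for some positive
definite function `f` on `G` with `f 1 = 1`. -/
theorem charFun_factors_iff_posDef_ratio
    {G : Type*} [Group G] [Finite G]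
    {H₁ : Type*} [NormedAddCommGroup H₁] [InnerProductSpace ℂ H₁] [FiniteDimensional ℂ H₁]
    {H₂ : Type*} [NormedAddCommGroup H₂] [InnerProductSpace ℂ H₂] [FiniteDimensional ℂ H₂]
    (U₁ : G →* (H₁ ≃ₗᵢ[ℂ] H₁)) (U₂ : G →* (H₂ ≃ₗᵢ[ℂ] H₂))
    (ψ : H₁) (φ : H₂) (hψ : ‖ψ‖ = 1) (hφ : ‖φ‖ = 1) :
    (∃ d : TensorExtension U₂, ‖d.η‖ = 1 ∧
        ∀ g : G, ⟪ψ, U₁ g ψ⟫ = ⟪d.tmul φ d.η, d.rep g (d.tmul φ d.η)⟫) ↔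
      (∃ f : G → ℂ, f 1 = 1 ∧
        (∀ (n : ℕ) (g : Fin n → G),
          (Matrix.of fun i j : Fin n => f ((g i)⁻¹ * g j)).PosSemidef) ∧
        ∀ g : G, ⟪ψ, U₁ g ψ⟫ = ⟪φ, U₂ g φ⟫ * f g) := by
  exact charFun_factors_iff_posDef_ratio_general U₂ (repCharFun U₁ ψ) φ
end

section
/- Let G be a group, H a complex inner product space, U : G →* (H ≃ₗᵢ[ℂ] H) a unitary representation, and ψ, φ ∈ H unit vectors. If their characteristic functions coincide, ⟪ψ, U(g) ψ⟫ = ⟪φ, U(g) φ⟫ for all g ∈ G, then their symmetry subgroups coincide: for every g ∈ G, there exists c ∈ ℂ with U(g) ψ = c • ψ if and only if there exists c' ∈ ℂ with U(g) φ = c' • φ. -/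
open scoped ComplexInnerProductSpace

section Isometry

variable {𝕜 E F : Type*} [RCLike 𝕜]
  [NormedAddCommGroup E] [InnerProductSpace 𝕜 E]
  [NormedAddCommGroup F] [InnerProductSpace 𝕜 F]

-- Since `‖T x‖ = ‖x‖`, this is the equality case of the Cauchy–Schwarz inequality.
theorem norm_inner_map_self_eq_norm_sq_iff (T : E →ₗᵢ[𝕜] E) (x : E) :
    ‖inner 𝕜 x (T x)‖ = ‖x‖ ^ 2 ↔ ∃ c : 𝕜, T x = c • x := by
  have zero_case : x = 0 → ∃ c : 𝕜, T x = c • x := by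
    rintro rfl
    exact ⟨0, by simp⟩
  calc ‖inner 𝕜 x (T x)‖ = ‖x‖ ^ 2
      ↔ ‖inner 𝕜 x (T x)‖ = ‖x‖ * ‖T x‖ := by rw [T.norm_map, sq]
    _ ↔ x = 0 ∨ ∃ c : 𝕜, T x = c • x := (norm_inner_eq_norm_tfae 𝕜 x (T x)).out 0 2
    _ ↔ ∃ c : 𝕜, T x = c • x := or_iff_right_of_imp zero_case

theorem exists_map_eq_smul_iff_of_norm_inner_map_self_eq (S : E →ₗᵢ[𝕜] E) (T : F →ₗᵢ[𝕜] F)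
    {x : E} {y : F} (hnorm : ‖x‖ = ‖y‖) (hinner : ‖inner 𝕜 x (S x)‖ = ‖inner 𝕜 y (T y)‖) :
    (∃ c : 𝕜, S x = c • x) ↔ ∃ c : 𝕜, T y = c • y := by
  rw [← norm_inner_map_self_eq_norm_sq_iff, ← norm_inner_map_self_eq_norm_sq_iff, hinner, hnorm]

theorem symmetryGroup_eq_of_charFun_eq_general {G : Type*} [Monoid G]
    (U : G →* (E ≃ₗᵢ[𝕜] E)) (V : G →* (F ≃ₗᵢ[𝕜] F)) {ψ : E} {φ : F}
    (hchar : ∀ g : G, ‖inner 𝕜 ψ (U g ψ)‖ = ‖inner 𝕜 φ (V g φ)‖) (g : G) :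
    (∃ c : 𝕜, U g ψ = c • ψ) ↔ ∃ c : 𝕜, V g φ = c • φ := by
  have inner_self_eq : ‖inner 𝕜 ψ ψ‖ = ‖inner 𝕜 φ φ‖ := by
    simpa only [map_one, LinearIsometryEquiv.coe_one, id_eq] using hchar 1
  have norm_eq : ‖ψ‖ = ‖φ‖ := by
    rw [norm_eq_sqrt_re_inner (𝕜 := 𝕜) ψ, norm_eq_sqrt_re_inner (𝕜 := 𝕜) φ,
      inner_self_re_eq_norm, inner_self_re_eq_norm, inner_self_eq]
  exact exists_map_eq_smul_iff_of_norm_inner_map_self_eq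
    (U g).toLinearIsometry (V g).toLinearIsometry norm_eq (hchar g)

end Isometry

/-- If two unit vectors `ψ, φ` of a unitary representation `U` of `G`
have equal characteristic functions, then they have the same symmetry subgroup: `ψ` is
an eigenvector of `U g` iff `φ` is. -/
theorem symmetryGroup_eq_of_charFun_eq
    {G : Type*} [Group G]
    {H : Type*} [NormedAddCommGroup H] [InnerProductSpace ℂ H]
    (U : G →* (H ≃ₗᵢ[ℂ] H)) (ψ φ : H) (hψ : ‖ψ‖ = 1) (hφ : ‖φ‖ = 1)
    (hchar : ∀ g : G, ⟪ψ, U g ψ⟫ = ⟪φ, U g φ⟫) :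
    ∀ g : G, (∃ c : ℂ, U g ψ = c • ψ) ↔ (∃ c' : ℂ, U g φ = c' • φ) :=
  symmetryGroup_eq_of_charFun_eq_general U U fun g => congrArg norm (hchar g)
end
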